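/- arXiv:2309.03975 — 2 statements merged into one kernel-verified Lean document; each statement's English description precedes it below -/
import Mathlib

section
/- Let f : B^n → ℝ be C^{d+1}, ω a polynomial parametric curve of degree at most s in ℝ^n with ω([-1,1]) ⊂ B^n, and g(t) = f(ω(t)). Then for each t ∈ [-1,1], Σ_{|α|=η}^{d+1} ‖f^{(α)}(ω(t))‖ ≥ C(n,d,s)·|g^{(d+1)}(t)|, where η = ⌊(d+1)/(s+1)⌋ + 1 and C(n,d,s) = [s^{2(d+1)}(n+1)^{d+1}(d+1)^{(d+1)(n+2)}]^{-1}. -/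
open Metric

open Polynomial in
/-- Markov's inequality at the right end point. -/
lemma markov_endpoint (s : ℕ) (Q : Polynomial ℝ) (hdeg : Q.natDegree ≤ s) {M : ℝ} (hM : 0 < M)
    (hb : ∀ x ∈ Set.Icc (-1 : ℝ) 1, |Q.eval x| ≤ M) :
    |(derivative Q).eval 1| ≤ (s : ℝ) ^ 2 * M := by
  have key : ∀ R : Polynomial ℝ, R.natDegree ≤ s →
      (∀ x ∈ Set.Icc (-1 : ℝ) 1, |R.eval x| ≤ M) →
      (derivative R).eval 1 ≤ (s : ℝ) ^ 2 * M := by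
    intro R hR hRb
    have h := Polynomial.Chebyshev.eval_iterate_derivative_le_of_forall_abs_le_one
      (n := s) (P := C M⁻¹ * R) (k := 1) (x := 1) le_rfl
      (by
        exact degree_le_of_natDegree_le ((natDegree_C_mul_le _ _).trans hR))
      (by
        intro x hx
        rw [eval_mul, eval_C, abs_mul, abs_of_pos (inv_pos.2 hM)]
        have := hRb x hx
        rw [inv_mul_le_iff₀ hM]; linarith)
    simp only [Function.iterate_one, derivative_C_mul, eval_mul, eval_C,
      Chebyshev.derivative_T_eval_one] at h
    rw [inv_mul_le_iff₀ hM] at h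
    push_cast at h
    linarith
  rw [abs_le]
  constructor
  · have := key (-Q) (by simpa using hdeg) (by simpa using hb)
    simp at this
    linarith
  · exact key Q hdeg hb

open Polynomial in
/-- A weak form (with an extra factor two) of Markov's inequality on the whole interval. -/
lemma markov_weak (s : ℕ) (Q : Polynomial ℝ) (hdeg : Q.natDegree ≤ s) {M : ℝ} (hM : 0 < M)
    (hb : ∀ x ∈ Set.Icc (-1 : ℝ) 1, |Q.eval x| ≤ M) :
    ∀ x ∈ Set.Icc (-1 : ℝ) 1, |(derivative Q).eval x| ≤ 2 * (s : ℝ) ^ 2 * M := by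
  have pos : ∀ R : Polynomial ℝ, R.natDegree ≤ s →
      (∀ x ∈ Set.Icc (-1 : ℝ) 1, |R.eval x| ≤ M) →
      ∀ x ∈ Set.Icc (0 : ℝ) 1, |(derivative R).eval x| ≤ 2 * (s : ℝ) ^ 2 * M := by
    intro R hR hRb x hx
    obtain ⟨hx0, hx1⟩ := hx
    set a : ℝ := (1 + x) / 2 with ha
    set b : ℝ := (x - 1) / 2 with hbd
    have hlin : (C a * X + C b).natDegree ≤ 1 := natDegree_linear_le
    have h := markov_endpoint s (R.comp (C a * X + C b))
      (by
        refine natDegree_comp_le.trans ?_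
        nlinarith) hM
      (by
        intro y hy
        rw [eval_comp]
        apply hRb
        simp only [eval_add, eval_mul, eval_C, eval_X]
        obtain ⟨hy0, hy1⟩ := hy
        constructor <;> nlinarith)
    rw [derivative_comp] at h
    simp only [derivative_add, derivative_mul, derivative_C, derivative_X, eval_mul, eval_comp,
      eval_add, eval_C, eval_X, zero_mul, zero_add, mul_one, add_zero] at h
    have e : a + b = x := by rw [ha, hbd]; ring
    rw [e, abs_mul, abs_of_nonneg (by rw [ha]; linarith : 0 ≤ a)] at h
    have ha2 : 1 / 2 ≤ a := by rw [ha]; linarith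
    have := abs_nonneg ((derivative R).eval x)
    nlinarith
  intro x hx
  rcases le_total 0 x with h0 | h0
  · exact pos Q hdeg hb x ⟨h0, hx.2⟩
  · have h := pos (Q.comp (-X))
      (by
        refine natDegree_comp_le.trans ?_
        simpa using hdeg)
      (by
        intro y hy
        rw [eval_comp]
        apply hb
        simp only [eval_neg, eval_X]
        exact ⟨by linarith [hy.2], by linarith [hy.1]⟩) (-x) ⟨by linarith, by linarith [hx.1]⟩
    rw [derivative_comp] at h
    simpa [eval_comp] using h

open Polynomial in
lemma markov_iter (s : ℕ) (hs : 1 ≤ s) (Q : Polynomial ℝ) (hdeg : Q.natDegree ≤ s)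
    (hb : ∀ x ∈ Set.Icc (-1 : ℝ) 1, |Q.eval x| ≤ 1) (k : ℕ) :
    ∀ x ∈ Set.Icc (-1 : ℝ) 1, |(derivative^[k] Q).eval x| ≤ (2 * (s : ℝ) ^ 2) ^ k := by
  have hs' : (0 : ℝ) < s := by exact_mod_cast hs
  induction k with
  | zero => simpa using hb
  | succ k ih =>
    rw [Function.iterate_succ_apply', pow_succ']
    refine markov_weak s _ ?_ (by positivity) ih
    exact (natDegree_iterate_derivative Q k).trans (by omega)

lemma card_orderedFinpartition_le (m : ℕ) :
    Fintype.card (OrderedFinpartition m) ≤ m.factorial := by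
  induction m with
  | zero =>
    rw [Fintype.card_unique]; simp
  | succ m ih =>
    rw [← Fintype.card_congr (OrderedFinpartition.extendEquiv m), Fintype.card_sigma]
    calc ∑ c : OrderedFinpartition m, Fintype.card (Option (Fin c.length))
        ≤ ∑ c : OrderedFinpartition m, (m + 1) := by
          refine Finset.sum_le_sum fun c _ => ?_
          have := c.length_le
          simpa using this
      _ = Fintype.card (OrderedFinpartition m) * (m + 1) := by simp
      _ ≤ (m + 1).factorial := by
          rw [Nat.factorial_succ, mul_comm]
          exact Nat.mul_le_mul_left _ ih

open Polynomial in
lemma iteratedDerivWithin_curve {n : ℕ} (P : Fin n → Polynomial ℝ)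
    (ω : ℝ → EuclideanSpace ℝ (Fin n)) (hωdef : ∀ t i, ω t i = (P i).eval t) (k : ℕ) :
    ∀ t ∈ Set.Icc (-1 : ℝ) 1, iteratedDerivWithin k ω (Set.Icc (-1 : ℝ) 1) t =
      WithLp.toLp 2 (fun i => (derivative^[k] (P i)).eval t) := by
  induction k with
  | zero =>
    intro t _
    ext i
    simp [hωdef]
  | succ k ih =>
    intro t ht
    rw [iteratedDerivWithin_succ, derivWithin_congr ih (ih t ht)]
    apply HasDerivWithinAt.derivWithin
    · rw [hasDerivWithinAt_iff_hasFDerivWithinAt, hasFDerivWithinAt_euclidean]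
      intro i
      have := ((derivative^[k] (P i)).hasDerivAt t).hasDerivWithinAt (s := Set.Icc (-1 : ℝ) 1)
      refine HasFDerivWithinAt.congr_fderiv this.hasFDerivWithinAt ?_
      ext
      simp [Function.iterate_succ_apply']
    · exact uniqueDiffOn_Icc (by norm_num) t ht

lemma multilinear_bound {n k : ℕ}
    (D : ContinuousMultilinearMap ℝ (fun _ : Fin k => EuclideanSpace ℝ (Fin n)) ℝ)
    (v : Fin k → EuclideanSpace ℝ (Fin n)) (B : Fin k → ℝ) (hB : ∀ j i, |v j i| ≤ B j) :
    |D v| ≤ (∏ j, B j) * ∑ c : Fin k → Fin n, |D (fun i => EuclideanSpace.single (c i) 1)| := by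
  have hv : v = fun j => ∑ i, v j i • EuclideanSpace.single i (1 : ℝ) := by
    funext j
    ext l
    simp [Finset.sum_apply, Pi.single_apply]
  conv_lhs => rw [hv]
  rw [ContinuousMultilinearMap.map_sum, Finset.mul_sum]
  refine (Finset.abs_sum_le_sum_abs _ _).trans (Finset.sum_le_sum fun c _ => ?_)
  rw [ContinuousMultilinearMap.map_smul_univ D (fun j => v j (c j))
    (fun j => EuclideanSpace.single (c j) (1 : ℝ)), smul_eq_mul, abs_mul, Finset.abs_prod]
  gcongr with j
  exact hB j _

/-- Main chain-rule inequality: for `f : Bⁿ → ℝ` of class `C^{d+1}`, a polynomial curve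
`ω` of degree ≤ `s` with `ω([-1,1]) ⊆ Bⁿ`, and `g = f ∘ ω`, for each `t ∈ [-1,1]` the sum
of the norms of the partial derivatives of `f` of orders `η = ⌊(d+1)/(s+1)⌋ + 1` up to
`d+1` at `ω(t)` is at least `C(n,d,s) |g^{(d+1)}(t)|`, where
`C(n,d,s) = [s^{2(d+1)} (n+1)^{d+1} (d+1)^{(d+1)(n+2)}]⁻¹`. -/
theorem main_chain_rule_inequality
    (n d s : ℕ) (f : EuclideanSpace ℝ (Fin n) → ℝ)
    (hf : ContDiffOn ℝ (d + 1) f (closedBall (0 : EuclideanSpace ℝ (Fin n)) 1))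
    (P : Fin n → Polynomial ℝ) (hdeg : ∀ i, (P i).natDegree ≤ s)
    (ω : ℝ → EuclideanSpace ℝ (Fin n)) (hωdef : ∀ t i, ω t i = (P i).eval t)
    (hball : ∀ t ∈ Set.Icc (-1 : ℝ) 1,
      ω t ∈ closedBall (0 : EuclideanSpace ℝ (Fin n)) 1) :
    ∀ t ∈ Set.Icc (-1 : ℝ) 1,
      ((s : ℝ) ^ (2 * (d + 1)) * (n + 1) ^ (d + 1) * (d + 1) ^ ((d + 1) * (n + 2)))⁻¹ *
          |iteratedDerivWithin (d + 1) (fun u => f (ω u)) (Set.Icc (-1 : ℝ) 1) t| ≤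
        ∑ k ∈ Finset.Icc ((d + 1) / (s + 1) + 1) (d + 1),
          ∑ c : Fin k → Fin n,
            |iteratedFDerivWithin ℝ k f (closedBall (0 : EuclideanSpace ℝ (Fin n)) 1)
              (ω t) (fun i => EuclideanSpace.single (c i) 1)| := by
  intro t ht
  set A : ℕ → ℝ := fun k => ∑ c : Fin k → Fin n,
    |iteratedFDerivWithin ℝ k f (closedBall (0 : EuclideanSpace ℝ (Fin n)) 1)
      (ω t) (fun i => EuclideanSpace.single (c i) 1)| with hA
  have hA0 : ∀ k, 0 ≤ A k := fun k => Finset.sum_nonneg fun _ _ => abs_nonneg _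
  change _ ≤ ∑ k ∈ Finset.Icc ((d + 1) / (s + 1) + 1) (d + 1), A k
  set S := ∑ k ∈ Finset.Icc ((d + 1) / (s + 1) + 1) (d + 1), A k with hS
  have hS0 : 0 ≤ S := Finset.sum_nonneg fun k _ => hA0 k
  rcases Nat.eq_zero_or_pos s with hs | hs
  · subst hs
    simpa using hS0
  rcases Nat.eq_zero_or_pos n with hn | hn
  · subst hn
    have : (fun u => f (ω u)) = fun _ => f 0 := by
      funext u
      rw [Subsingleton.elim (ω u) 0]
    rw [this, iteratedDerivWithin_const]
    simpa using hS0
  have hsR : (0 : ℝ) < s := by exact_mod_cast hs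
  have huI : UniqueDiffOn ℝ (Set.Icc (-1 : ℝ) 1) := uniqueDiffOn_Icc (by norm_num)
  have huB : UniqueDiffOn ℝ (closedBall (0 : EuclideanSpace ℝ (Fin n)) 1) := by
    refine uniqueDiffOn_convex (convex_closedBall _ _) ?_
    refine ⟨0, ball_subset_interior_closedBall ?_⟩
    simp
  have hω : ContDiff ℝ (d + 1) ω := by
    rw [contDiff_euclidean]
    intro i
    simp only [hωdef]
    simpa using (P i).contDiff_aeval (𝕜 := ℝ) (d + 1)
  have hP1 : ∀ i, ∀ x ∈ Set.Icc (-1 : ℝ) 1, |(P i).eval x| ≤ 1 := by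
    intro i x hx
    have h1 := hball x hx
    rw [mem_closedBall_zero_iff] at h1
    rw [← hωdef, ← Real.norm_eq_abs]
    exact (PiLp.norm_apply_le (ω x) i).trans h1
  have hcomp := (hf.ftaylorSeriesWithin huB).comp (hω.contDiffOn.ftaylorSeriesWithin huI) hball
  have heq := hcomp.eq_iteratedFDerivWithin_of_uniqueDiffOn (m := d + 1) (by norm_cast) huI ht
  have hg : iteratedDerivWithin (d + 1) (fun u => f (ω u)) (Set.Icc (-1 : ℝ) 1) t =
      ∑ c : OrderedFinpartition (d + 1),
        iteratedFDerivWithin ℝ c.length f (closedBall (0 : EuclideanSpace ℝ (Fin n)) 1) (ω t)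
          (fun m => iteratedDerivWithin (c.partSize m) ω (Set.Icc (-1 : ℝ) 1) t) := by
    rw [iteratedDerivWithin_eq_iteratedFDerivWithin]
    change (iteratedFDerivWithin ℝ (d + 1) (f ∘ ω) (Set.Icc (-1 : ℝ) 1) t) _ = _
    rw [← heq, FormalMultilinearSeries.taylorComp, _root_.sum_apply]
    rfl
  have hterm : ∀ c : OrderedFinpartition (d + 1),
      |iteratedFDerivWithin ℝ c.length f (closedBall (0 : EuclideanSpace ℝ (Fin n)) 1) (ω t)
          (fun m => iteratedDerivWithin (c.partSize m) ω (Set.Icc (-1 : ℝ) 1) t)| ≤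
        (2 * (s : ℝ) ^ 2) ^ (d + 1) * S := by
    intro c
    have hsum : ∑ m, c.partSize m = d + 1 := by
      have := c.sum_sigma_eq_sum (fun _ => 1)
      simpa using this
    by_cases hlarge : ∃ m, s < c.partSize m
    · obtain ⟨m, hm⟩ := hlarge
      rw [ContinuousMultilinearMap.map_coord_zero _ m]
      · rw [abs_zero]; positivity
      · rw [iteratedDerivWithin_curve P ω hωdef _ t ht]
        ext i
        simp only
        rw [Polynomial.iterate_derivative_eq_zero ((hdeg i).trans_lt hm)]
        simp
    · push Not at hlarge
      have hle : A c.length ≤ S := by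
        refine Finset.single_le_sum (f := A) (fun k _ => hA0 k) ?_
        rw [Finset.mem_Icc]
        refine ⟨?_, c.length_le⟩
        have h1 : d + 1 ≤ c.length * s := by
          calc d + 1 = ∑ m, c.partSize m := hsum.symm
            _ ≤ ∑ _m : Fin c.length, s := Finset.sum_le_sum fun m _ => hlarge m
            _ = _ := by simp
        have h2 : 0 < c.length := c.length_pos (Nat.succ_pos d)
        rw [Nat.succ_le_iff, Nat.div_lt_iff_lt_mul (Nat.succ_pos s)]
        nlinarith
      have hb := multilinear_bound
        (iteratedFDerivWithin ℝ c.length f (closedBall (0 : EuclideanSpace ℝ (Fin n)) 1) (ω t))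
        (fun m => iteratedDerivWithin (c.partSize m) ω (Set.Icc (-1 : ℝ) 1) t)
        (fun m => (2 * (s : ℝ) ^ 2) ^ c.partSize m)
        (by
          intro m i
          rw [iteratedDerivWithin_curve P ω hωdef _ t ht]
          exact markov_iter s hs (P i) (hdeg i) (hP1 i) _ t ht)
      rw [Finset.prod_pow_eq_pow_sum, hsum] at hb
      refine hb.trans ?_
      gcongr
  have hcard : (Fintype.card (OrderedFinpartition (d + 1)) : ℝ) ≤ ((d : ℝ) + 1) ^ (d + 1) := by
    have := (card_orderedFinpartition_le (d + 1)).trans (Nat.factorial_le_pow (d + 1))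
    exact_mod_cast this
  have htot : |iteratedDerivWithin (d + 1) (fun u => f (ω u)) (Set.Icc (-1 : ℝ) 1) t| ≤
      ((d : ℝ) + 1) ^ (d + 1) * ((2 * (s : ℝ) ^ 2) ^ (d + 1) * S) := by
    rw [hg]
    refine (Finset.abs_sum_le_sum_abs _ _).trans
      ((Finset.sum_le_sum fun c _ => hterm c).trans ?_)
    rw [Finset.sum_const, Finset.card_univ, nsmul_eq_mul]
    gcongr
  rw [inv_mul_le_iff₀ (by positivity)]
  refine htot.trans ?_
  have hn2 : (2 : ℝ) ^ (d + 1) ≤ ((n : ℝ) + 1) ^ (d + 1) := by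
    have : (1 : ℝ) ≤ n := by exact_mod_cast hn
    gcongr
    linarith
  have hd2 : ((d : ℝ) + 1) ^ (d + 1) ≤ ((d : ℝ) + 1) ^ ((d + 1) * (n + 2)) := by
    apply pow_le_pow_right₀
    · linarith [(Nat.cast_nonneg d : (0 : ℝ) ≤ d)]
    · nlinarith
  calc ((d : ℝ) + 1) ^ (d + 1) * ((2 * (s : ℝ) ^ 2) ^ (d + 1) * S)
      = (s : ℝ) ^ (2 * (d + 1)) * 2 ^ (d + 1) * (d + 1) ^ (d + 1) * S := by
        rw [mul_pow, ← pow_mul]; ring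
    _ ≤ _ := by gcongr
end

section
/- Let f : B^n → ℝ be C^{d+1}, ω a degree-≤ s polynomial curve with ω([-1,1]) ⊂ B^n. Suppose ω([-1,1]) contains at least d+1 distinct zeros of f, and that m := max_{t ∈ [-1,1]} |f(ω(t))| > 0. Then Σ_{|α|=η}^{d+1} max_{x ∈ B^n} ‖f^{(α)}(x)‖ ≥ m·(d+1)!·C(n,d,s)/2^{d+1}, with η = ⌊(d+1)/(s+1)⌋ + 1 and C(n,d,s) = [s^{2(d+1)}(n+1)^{d+1}(d+1)^{(d+1)(n+2)}]^{-1}. -/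
open Metric

/-- Generalized Rolle theorem on a closed interval. -/
lemma rig_rolle {a b : ℝ} (hab : a < b) (N : ℕ) : ∀ h : ℝ → ℝ, ContDiffOn ℝ N h (Set.Icc a b) →
    ∀ s : Fin (N + 1) → ℝ, StrictMono s → (∀ i, s i ∈ Set.Icc a b) → (∀ i, h (s i) = 0) →
    ∃ ξ ∈ Set.Icc a b, iteratedDerivWithin N h (Set.Icc a b) ξ = 0 := by
  induction N with
  | zero =>
    intro h _ s _ hs h0
    exact ⟨s 0, hs 0, by simpa using h0 0⟩
  | succ N ih =>
    intro h hh s hmono hs h0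
    have key : ∀ i : Fin (N + 1), ∃ c ∈ Set.Ioo (s i.castSucc) (s i.succ),
        derivWithin h (Set.Icc a b) c = 0 := by
      intro i
      have hlt : s i.castSucc < s i.succ := hmono Fin.castSucc_lt_succ
      obtain ⟨c, hc, hc0⟩ := exists_deriv_eq_zero hlt
        (hh.continuousOn.mono (Set.Icc_subset_Icc (hs _).1 (hs _).2)) (by rw [h0, h0])
      refine ⟨c, hc, ?_⟩
      rw [derivWithin_of_mem_nhds, hc0]
      exact Icc_mem_nhds (lt_of_le_of_lt (hs _).1 hc.1) (lt_of_lt_of_le hc.2 (hs _).2)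
    choose c hc hc0 using key
    have hu := uniqueDiffOn_Icc hab
    obtain ⟨ξ, hξ, hξ0⟩ := ih (derivWithin h (Set.Icc a b))
      (hh.derivWithin hu (by norm_cast)) c
      (by
        intro i j hij
        calc c i < s i.succ := (hc i).2
          _ ≤ s j.castSucc := hmono.monotone (by rw [Fin.le_def]; simpa using hij)
          _ < c j := (hc j).1)
      (fun i => ⟨(hs _).1.trans (hc i).1.le, (hc i).2.le.trans (hs _).2⟩) hc0
    exact ⟨ξ, hξ, by rw [iteratedDerivWithin_succ', hξ0]⟩

/-- Iterated derivatives of a polynomial curve. -/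
lemma rig_iter {ι E : Type*} [Fintype ι] [NormedAddCommGroup E] [NormedSpace ℝ E]
    {a b : ℝ} (hab : a < b) (P : ι → Polynomial ℝ) (v : ι → E) (p : ℕ) :
    ∀ t ∈ Set.Icc a b, iteratedDerivWithin p (fun t => ∑ i, (P i).eval t • v i) (Set.Icc a b) t
      = ∑ i, (Polynomial.derivative^[p] (P i)).eval t • v i := by
  induction p with
  | zero => intro t _; simp
  | succ p ih =>
    intro t ht
    rw [iteratedDerivWithin_succ, derivWithin_congr ih (ih t ht)]
    have : HasDerivAt (fun t => ∑ i, (Polynomial.derivative^[p] (P i)).eval t • v i)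
        (∑ i, (Polynomial.derivative^[p+1] (P i)).eval t • v i) t := by
      apply HasDerivAt.fun_sum
      intro i _
      rw [Function.iterate_succ_apply']
      exact (Polynomial.hasDerivAt _ _).smul_const _
    exact this.hasDerivWithinAt.derivWithin (uniqueDiffOn_Icc hab t ht)

/-- Lower bound for the `d+1`-st derivative. -/
lemma rig_lower (d : ℕ) (g : ℝ → ℝ) (hg : ContDiffOn ℝ ((d + 1 : ℕ) : WithTop ℕ∞) g (Set.Icc (-1) 1))
    (T : Finset ℝ) (hT : (T : Set ℝ) ⊆ Set.Icc (-1 : ℝ) 1)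
    (hTcard : T.card = d + 1) (hTzero : ∀ t ∈ T, g t = 0)
    (u : ℝ) (hu : u ∈ Set.Icc (-1 : ℝ) 1) (hu0 : g u ≠ 0) :
    ∃ ξ ∈ Set.Icc (-1 : ℝ) 1, |g u| * (Nat.factorial (d + 1) : ℝ) / 2 ^ (d + 1) ≤
      |iteratedDerivWithin (d + 1) g (Set.Icc (-1) 1) ξ| := by
  have h11 : (-1 : ℝ) < 1 := by norm_num
  have huT : u ∉ T := fun h => hu0 (hTzero u h)
  set W : Polynomial ℝ := ∏ t ∈ T, (Polynomial.X - Polynomial.C t) with hW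
  have hWe : ∀ x, W.eval x = ∏ t ∈ T, (x - t) := by
    intro x; simp [hW, Polynomial.eval_prod]
  have hWu : W.eval u ≠ 0 := by
    rw [hWe, Finset.prod_ne_zero_iff]
    intro t ht h
    exact huT (by rw [sub_eq_zero.mp h]; exact ht)
  have hWb : |W.eval u| ≤ 2 ^ (d + 1) := by
    rw [hWe, Finset.abs_prod, ← hTcard, ← Finset.prod_const]
    apply Finset.prod_le_prod
    · intros; positivity
    · intro t ht
      have := hT ht
      rw [abs_le]
      constructor <;> linarith [this.1, this.2, hu.1, hu.2]
  have hWm : W.Monic := Polynomial.monic_prod_of_monic _ _ fun i _ => Polynomial.monic_X_sub_C i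
  have hWd : W.natDegree = d + 1 := by
    rw [hW, Polynomial.natDegree_prod_of_monic _ _ fun i _ => Polynomial.monic_X_sub_C i]
    simp [hTcard]
  have hWder : ∀ x, (Polynomial.derivative^[d+1] W).eval x = (Nat.factorial (d + 1) : ℝ) := by
    intro x
    have h1 : (Polynomial.derivative^[d+1] W).natDegree = 0 := by
      have := Polynomial.natDegree_iterate_derivative W (d+1)
      omega
    rw [Polynomial.eq_C_of_natDegree_eq_zero h1, Polynomial.eval_C,
      Polynomial.coeff_iterate_derivative, zero_add]
    have : W.coeff (d+1) = 1 := by rw [← hWd]; exact hWm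
    rw [this, Nat.descFactorial_self, nsmul_eq_mul, mul_one]
  set K : ℝ := - (g u / W.eval u) with hK
  set q : ℝ → ℝ := fun t => ∑ i : Unit, W.eval t • K with hq
  have hqc : ContDiff ℝ ((d + 1 : ℕ) : WithTop ℕ∞) q := by
    have : ContDiff ℝ ((d + 1 : ℕ) : WithTop ℕ∞) (fun t => W.eval t) := by
      simpa using Polynomial.contDiff_aeval (𝕜 := ℝ) W ((d + 1 : ℕ) : WithTop ℕ∞)
    simp only [hq, Finset.univ_unique, Finset.sum_singleton]
    exact this.smul contDiff_const
  have hcard : (insert u T).card = d + 1 + 1 := by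
    rw [Finset.card_insert_of_notMem huT, hTcard]
  have hmem : ∀ i, (insert u T).orderEmbOfFin hcard i ∈ insert u T :=
    fun i => Finset.orderEmbOfFin_mem _ hcard i
  obtain ⟨ξ, hξ, hξ0⟩ := rig_rolle h11 (d+1) (g + q) (hg.add hqc.contDiffOn)
    ((insert u T).orderEmbOfFin hcard) (OrderEmbedding.strictMono _)
    (by
      intro i
      rcases Finset.mem_insert.mp (hmem i) with h | h
      · rw [h]; exact hu
      · exact hT h)
    (by
      intro i
      rcases Finset.mem_insert.mp (hmem i) with h | h
      · rw [h]; simp [hq, hK]; field_simp; ring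
      · have : W.eval ((insert u T).orderEmbOfFin hcard i) = 0 := by
          rw [hWe]; exact Finset.prod_eq_zero h (sub_self _)
        simp [hq, this, hTzero _ h])
  refine ⟨ξ, hξ, ?_⟩
  rw [iteratedDerivWithin_add hξ (uniqueDiffOn_Icc h11) (hg ξ hξ) (hqc.contDiffOn ξ hξ), hq,
    rig_iter h11 (fun _ : Unit => W) (fun _ => K) (d+1) ξ hξ] at hξ0
  simp only [Finset.univ_unique, Finset.sum_singleton, hWder, smul_eq_mul, hK] at hξ0
  have : iteratedDerivWithin (d + 1) g (Set.Icc (-1) 1) ξ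
      = (Nat.factorial (d + 1) : ℝ) * (g u / W.eval u) := by linarith
  rw [this, abs_mul, abs_div, Nat.abs_cast, mul_comm (|g u|), mul_div_assoc]
  have : 0 < |W.eval u| := abs_pos.mpr hWu
  gcongr

/-- Weak Markov inequality: one sided. -/
lemma rig_markov_aux (s : ℕ) (P : Polynomial ℝ) (hd : P.natDegree ≤ s)
    (hP : ∀ x ∈ Set.Icc (-1 : ℝ) 1, |P.eval x| ≤ 1) (x : ℝ) (hx0 : 0 ≤ x) (hx1 : x ≤ 1) :
    (Polynomial.derivative P).eval x ≤ 2 * (s : ℝ) ^ 2 := by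
  set L : Polynomial ℝ := Polynomial.C ((x + 1) / 2) * Polynomial.X + Polynomial.C ((x - 1) / 2)
    with hL
  have hLd : L.natDegree ≤ 1 := Polynomial.natDegree_linear_le
  have hQd : (P.comp L).natDegree ≤ s := by
    refine Polynomial.natDegree_comp_le.trans ?_
    calc P.natDegree * L.natDegree ≤ s * 1 := Nat.mul_le_mul hd hLd
      _ = s := mul_one s
  have := Polynomial.Chebyshev.eval_iterate_derivative_le_of_forall_abs_le_one (n := s)
    (P := P.comp L) (k := 1) (x := 1) le_rfl
    (Polynomial.degree_le_of_natDegree_le hQd) (by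
      intro y hy
      rw [Polynomial.eval_comp]
      apply hP
      simp only [hL, Polynomial.eval_add, Polynomial.eval_mul, Polynomial.eval_C, Polynomial.eval_X]
      constructor <;> nlinarith [hy.1, hy.2])
  have hT : (Polynomial.derivative (Polynomial.Chebyshev.T ℝ s)).eval 1 = (s : ℝ) ^ 2 := by
    rw [Polynomial.Chebyshev.derivative_T_eval_one]; simp
  simp only [Function.iterate_one, hT, Polynomial.derivative_comp, Polynomial.eval_mul,
    Polynomial.eval_comp] at this
  have hL1 : L.eval 1 = x := by simp [hL]; ring
  have hL2 : (Polynomial.derivative L).eval 1 = (x + 1) / 2 := by simp [hL]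
  rw [hL1, hL2] at this
  by_cases h : (Polynomial.derivative P).eval x ≤ 0
  · exact h.trans (by positivity)
  · push Not at h
    nlinarith

/-- Weak Markov inequality. -/
lemma rig_markov (s : ℕ) (P : Polynomial ℝ) (hd : P.natDegree ≤ s)
    (hP : ∀ x ∈ Set.Icc (-1 : ℝ) 1, |P.eval x| ≤ 1) (x : ℝ) (hx : x ∈ Set.Icc (-1 : ℝ) 1) :
    |(Polynomial.derivative P).eval x| ≤ 2 * (s : ℝ) ^ 2 := by
  have pos : ∀ Q : Polynomial ℝ, Q.natDegree ≤ s → (∀ x ∈ Set.Icc (-1 : ℝ) 1, |Q.eval x| ≤ 1) →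
      ∀ x : ℝ, 0 ≤ x → x ≤ 1 → |(Polynomial.derivative Q).eval x| ≤ 2 * (s : ℝ) ^ 2 := by
    intro Q hQd hQ x hx0 hx1
    rw [abs_le]
    have h1 := rig_markov_aux s Q hQd hQ x hx0 hx1
    have h2 := rig_markov_aux s (-Q) (by simpa using hQd) (by simpa using hQ) x hx0 hx1
    simp at h2
    constructor <;> linarith
  rcases le_total 0 x with h | h
  · exact pos P hd hP x h hx.2
  · have := pos (P.comp (-Polynomial.X))
      (by
        refine Polynomial.natDegree_comp_le.trans ?_
        simpa using hd)
      (by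
        intro y hy
        rw [Polynomial.eval_comp]
        apply hP
        simp only [Polynomial.eval_neg, Polynomial.eval_X]
        constructor <;> linarith [hy.1, hy.2]) (-x) (by linarith) (by linarith [hx.1])
    simpa [Polynomial.derivative_comp] using this

lemma rig_markov_iter (s : ℕ) (hs : 0 < s) (P : Polynomial ℝ) (hd : P.natDegree ≤ s)
    (hP : ∀ x ∈ Set.Icc (-1 : ℝ) 1, |P.eval x| ≤ 1) (p : ℕ) :
    ∀ x ∈ Set.Icc (-1 : ℝ) 1,
    |(Polynomial.derivative^[p] P).eval x| ≤ (2 * (s : ℝ) ^ 2) ^ p := by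
  induction p with
  | zero => simpa using hP
  | succ p ih =>
    intro x hx
    set c : ℝ := (2 * (s : ℝ) ^ 2) ^ p with hc
    have hcpos : 0 < c := by positivity
    set Q := Polynomial.derivative^[p] P with hQ
    have hQd : Q.natDegree ≤ s := by
      have := Polynomial.natDegree_iterate_derivative P p
      rw [hQ]
      omega
    have := rig_markov s (Polynomial.C c⁻¹ * Q) ((Polynomial.natDegree_C_mul_le _ _).trans hQd)
      (by
        intro y hy
        rw [Polynomial.eval_mul, Polynomial.eval_C, abs_mul, abs_of_pos (inv_pos.mpr hcpos)]
        rw [inv_mul_le_iff₀ hcpos, mul_one]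
        exact ih y hy) x hx
    rw [Polynomial.derivative_C_mul, Polynomial.eval_mul, Polynomial.eval_C, abs_mul,
      abs_of_pos (inv_pos.mpr hcpos), inv_mul_le_iff₀ hcpos] at this
    rw [Function.iterate_succ_apply', pow_succ]
    exact this

lemma rig_card (N : ℕ) : Fintype.card (OrderedFinpartition N) ≤ N.factorial := by
  induction N with
  | zero => simp
  | succ N ih =>
    rw [← Fintype.card_congr (OrderedFinpartition.extendEquiv N), Fintype.card_sigma]
    calc ∑ c : OrderedFinpartition N, Fintype.card (Option (Fin c.length))
        ≤ ∑ c : OrderedFinpartition N, (N + 1) := by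
          apply Finset.sum_le_sum
          intro c _
          simp [c.length_le]
      _ ≤ (N + 1).factorial := by
          rw [Finset.sum_const, Finset.card_univ, smul_eq_mul, Nat.factorial_succ, mul_comm]
          exact Nat.mul_le_mul_left _ ih

lemma rig_sum_partSize {N : ℕ} (c : OrderedFinpartition N) : ∑ j, c.partSize j = N := by
  have := c.sum_sigma_eq_sum (fun _ => (1 : ℕ))
  simpa using this

/-- Expansion of a multilinear map in coordinates. -/
lemma rig_multi {E : Type*} [NormedAddCommGroup E] [NormedSpace ℝ E] {n k : ℕ}
    (M : ContinuousMultilinearMap ℝ (fun _ : Fin k => E) ℝ) (e : Fin n → E)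
    (a : Fin k → Fin n → ℝ) (B : Fin k → ℝ) (hB : ∀ j i, |a j i| ≤ B j) :
    |M (fun j => ∑ i, a j i • e i)| ≤ (∏ j, B j) * ∑ c : Fin k → Fin n, |M (fun j => e (c j))| := by
  have h1 : M (fun j => ∑ i, a j i • e i)
      = ∑ c : Fin k → Fin n, (∏ j, a j (c j)) * M (fun j => e (c j)) := by
    rw [ContinuousMultilinearMap.map_sum]
    refine Finset.sum_congr rfl fun c _ => ?_
    rw [ContinuousMultilinearMap.map_smul_univ, smul_eq_mul]
  rw [h1, Finset.mul_sum]
  refine (Finset.abs_sum_le_sum_abs _ _).trans (Finset.sum_le_sum fun c _ => ?_)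
  rw [abs_mul, Finset.abs_prod]
  refine mul_le_mul_of_nonneg_right ?_ (abs_nonneg _)
  exact Finset.prod_le_prod (fun _ _ => abs_nonneg _) fun j _ => hB j _

/-- Smooth rigidity on polynomial curves: if a degree-≤ `s` polynomial curve
`ω : [-1,1] → Bⁿ` passes through at least `d+1` distinct zeros of a `C^{d+1}` function
`f : Bⁿ → ℝ` and `m = max_{[-1,1]} |f(ω(t))| > 0`, then the sum over orders
`η = ⌊(d+1)/(s+1)⌋ + 1` to `d+1` of the sup over `Bⁿ` of the norms of the partial
derivatives of `f` is at least `m (d+1)! C(n,d,s) / 2^{d+1}`, with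
`C(n,d,s) = [s^{2(d+1)} (n+1)^{d+1} (d+1)^{(d+1)(n+2)}]⁻¹`. (The sups are encoded by an
arbitrary family of upper bounds `A k`.) -/
theorem rigidity_on_polynomial_curves
    (n d s : ℕ) (f : EuclideanSpace ℝ (Fin n) → ℝ)
    (hf : ContDiffOn ℝ (d + 1) f (closedBall (0 : EuclideanSpace ℝ (Fin n)) 1))
    (P : Fin n → Polynomial ℝ) (hdeg : ∀ i, (P i).natDegree ≤ s)
    (ω : ℝ → EuclideanSpace ℝ (Fin n)) (hωdef : ∀ t i, ω t i = (P i).eval t)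
    (hball : ∀ t ∈ Set.Icc (-1 : ℝ) 1,
      ω t ∈ closedBall (0 : EuclideanSpace ℝ (Fin n)) 1)
    (T : Finset ℝ) (hT : (T : Set ℝ) ⊆ Set.Icc (-1 : ℝ) 1)
    (hTcard : d + 1 ≤ T.card) (hTzero : ∀ t ∈ T, f (ω t) = 0)
    (m : ℝ) (hm0 : 0 < m)
    (hmbound : ∀ t ∈ Set.Icc (-1 : ℝ) 1, |f (ω t)| ≤ m)
    (hmattain : ∃ t ∈ Set.Icc (-1 : ℝ) 1, |f (ω t)| = m) :
    ∀ A : ℕ → ℝ,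
      (∀ k, ∀ x ∈ closedBall (0 : EuclideanSpace ℝ (Fin n)) 1,
        (∑ c : Fin k → Fin n,
          |iteratedFDerivWithin ℝ k f (closedBall (0 : EuclideanSpace ℝ (Fin n)) 1) x
            (fun i => EuclideanSpace.single (c i) 1)|) ≤ A k) →
      m * (Nat.factorial (d + 1) : ℝ) *
          ((s : ℝ) ^ (2 * (d + 1)) * (n + 1) ^ (d + 1) *
            (d + 1) ^ ((d + 1) * (n + 2)))⁻¹ / 2 ^ (d + 1) ≤
        ∑ k ∈ Finset.Icc ((d + 1) / (s + 1) + 1) (d + 1), A k := by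
  intro A hA
  rcases Nat.eq_zero_or_pos s with hs | hs
  · subst hs
    simp
  rcases Nat.eq_zero_or_pos n with hn | hn
  · exfalso
    subst hn
    obtain ⟨t, _, htm⟩ := hmattain
    obtain ⟨u, hu⟩ : T.Nonempty := Finset.card_pos.mp (by omega)
    have h1 : ω t = ω u := Subsingleton.elim _ _
    rw [h1, hTzero u hu, abs_zero] at htm
    linarith
  have h11 : (-1 : ℝ) < 1 := by norm_num
  set I : Set ℝ := Set.Icc (-1 : ℝ) 1 with hI
  set Bn : Set (EuclideanSpace ℝ (Fin n)) := closedBall 0 1 with hBn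
  have hωsum : ω = fun t => ∑ i, (P i).eval t • (EuclideanSpace.single i (1 : ℝ)) := by
    funext t
    ext j
    simp [hωdef, Pi.single_apply]
  have hωc : ContDiff ℝ ((d + 1 : ℕ) : WithTop ℕ∞) ω := by
    rw [hωsum]
    refine ContDiff.sum fun i _ => ContDiff.fun_smul ?_ contDiff_const
    simpa using Polynomial.contDiff_aeval (𝕜 := ℝ) (P i) ((d + 1 : ℕ) : WithTop ℕ∞)
  have hf' : ContDiffOn ℝ ((d + 1 : ℕ) : WithTop ℕ∞) f Bn := by exact_mod_cast hf
  have hmaps : Set.MapsTo ω I Bn := fun t ht => hball t ht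
  have hPb : ∀ i, ∀ x ∈ I, |(P i).eval x| ≤ 1 := by
    intro i x hx
    rw [← hωdef, ← Real.norm_eq_abs]
    exact (PiLp.norm_apply_le (ω x) i).trans (by simpa [hBn] using hball x hx)
  obtain ⟨T', hT'T, hT'card⟩ := Finset.exists_subset_card_eq hTcard
  obtain ⟨u, hu, hum⟩ := hmattain
  obtain ⟨ξ, hξ, hlow⟩ := rig_lower d (f ∘ ω) (hf'.comp hωc.contDiffOn hmaps) T'
    (fun t ht => hT (hT'T ht)) hT'card (fun t ht => hTzero t (hT'T ht)) u hu
    (by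
      intro h
      have h' : f (ω u) = 0 := h
      rw [h', abs_zero] at hum
      linarith)
  have hA0 : ∀ k, 0 ≤ A k := fun k =>
    (Finset.sum_nonneg fun _ _ => abs_nonneg _).trans (hA k 0 (by simp [hBn]))
  have hBu : UniqueDiffOn ℝ Bn := by
    apply uniqueDiffOn_convex (convex_closedBall _ _)
    refine ⟨0, ?_⟩
    rw [mem_interior_iff_mem_nhds]
    exact closedBall_mem_nhds _ one_pos
  have hfaa := iteratedDerivWithin_vcomp_eq_sum_orderedFinpartition (i := d + 1)
    (hf' (ω ξ) (hmaps hξ)) (hωc.contDiffOn (s := I) ξ hξ) hBu (uniqueDiffOn_Icc h11) hξ hmaps le_rfl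
  set S : ℝ := ∑ k ∈ Finset.Icc ((d + 1) / (s + 1) + 1) (d + 1), A k with hS
  have hS0 : 0 ≤ S := Finset.sum_nonneg fun k _ => hA0 k
  have hterm : ∀ c : OrderedFinpartition (d + 1),
      |iteratedFDerivWithin ℝ c.length f Bn (ω ξ) fun j ↦
        iteratedDerivWithin (c.partSize j) ω I ξ| ≤ (2 * (s : ℝ) ^ 2) ^ (d + 1) * S := by
    intro c
    have hder : (fun j => iteratedDerivWithin (c.partSize j) ω I ξ) = fun j : Fin c.length =>
        ∑ i, (Polynomial.derivative^[c.partSize j] (P i)).eval ξ •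
          (EuclideanSpace.single i (1 : ℝ) : EuclideanSpace ℝ (Fin n)) := by
      funext j
      rw [hωsum]
      exact rig_iter h11 P _ _ ξ hξ
    by_cases hbig : ∃ j, s < c.partSize j
    · obtain ⟨j, hj⟩ := hbig
      have hz : iteratedDerivWithin (c.partSize j) ω I ξ = 0 := by
        rw [congrFun hder j]
        refine Finset.sum_eq_zero fun i _ => ?_
        rw [Polynomial.iterate_derivative_eq_zero (lt_of_le_of_lt (hdeg i) hj)]
        simp
      rw [ContinuousMultilinearMap.map_coord_zero _ j hz, abs_zero]
      positivity
    · push Not at hbig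
      have hlen : d + 1 ≤ c.length * s := by
        calc d + 1 = ∑ j, c.partSize j := (rig_sum_partSize c).symm
          _ ≤ ∑ _j : Fin c.length, s := Finset.sum_le_sum fun j _ => hbig j
          _ = c.length * s := by simp
      have hlpos : 0 < c.length := c.length_pos (Nat.succ_pos d)
      have hmem : c.length ∈ Finset.Icc ((d + 1) / (s + 1) + 1) (d + 1) := by
        rw [Finset.mem_Icc]
        refine ⟨?_, c.length_le⟩
        rw [Nat.succ_le_iff, Nat.div_lt_iff_lt_mul (Nat.succ_pos s)]
        calc d + 1 ≤ c.length * s := hlen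
          _ < c.length * (s + 1) := Nat.mul_lt_mul_of_pos_left (Nat.lt_succ_self s) hlpos
      have hAS : A c.length ≤ S :=
        Finset.single_le_sum (f := A) (fun k _ => hA0 k) hmem
      rw [hder]
      refine (rig_multi _ _ _ (fun j => (2 * (s : ℝ) ^ 2) ^ (c.partSize j))
        (fun j i => rig_markov_iter s hs (P i) (hdeg i) (hPb i) _ ξ hξ)).trans ?_
      rw [Finset.prod_pow_eq_pow_sum, rig_sum_partSize]
      exact mul_le_mul_of_nonneg_left ((hA _ _ (hmaps hξ)).trans hAS) (by positivity)
  have hup : |iteratedDerivWithin (d + 1) (f ∘ ω) I ξ| ≤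
      ((d + 1 : ℝ) ^ (d + 1)) * ((2 * (s : ℝ) ^ 2) ^ (d + 1) * S) := by
    rw [hfaa]
    refine (Finset.abs_sum_le_sum_abs _ _).trans ((Finset.sum_le_sum fun c _ => hterm c).trans ?_)
    rw [Finset.sum_const, Finset.card_univ, nsmul_eq_mul]
    refine mul_le_mul_of_nonneg_right ?_ (by positivity)
    have := (rig_card (d + 1)).trans (Nat.factorial_le_pow (d + 1))
    exact_mod_cast this
  have hlow' : m * (Nat.factorial (d + 1) : ℝ) / 2 ^ (d + 1) ≤
      ((d + 1 : ℝ) ^ (d + 1)) * ((2 * (s : ℝ) ^ 2) ^ (d + 1) * S) := by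
    rw [← hum]
    exact hlow.trans hup
  have hspos : (0 : ℝ) < s := by exact_mod_cast hs
  set D : ℝ := (s : ℝ) ^ (2 * (d + 1)) * (n + 1) ^ (d + 1) * (d + 1) ^ ((d + 1) * (n + 2)) with hD
  have hDpos : 0 < D := by positivity
  have hcmp : ((d + 1 : ℝ) ^ (d + 1)) * (2 * (s : ℝ) ^ 2) ^ (d + 1) ≤ D := by
    have h2 : (2 : ℝ) ≤ n + 1 := by
      have : (1 : ℝ) ≤ n := by exact_mod_cast hn
      linarith
    have h3 : (d + 1 : ℝ) ^ (d + 1) ≤ (d + 1) ^ ((d + 1) * (n + 2)) :=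
      pow_le_pow_right₀ (by linarith [(Nat.cast_nonneg d : (0 : ℝ) ≤ d)])
        (Nat.le_mul_of_pos_right _ (by omega))
    calc ((d + 1 : ℝ) ^ (d + 1)) * (2 * (s : ℝ) ^ 2) ^ (d + 1)
        = (s : ℝ) ^ (2 * (d + 1)) * 2 ^ (d + 1) * (d + 1) ^ (d + 1) := by
          rw [mul_pow, ← pow_mul]; ring
      _ ≤ D := by rw [hD]; gcongr
  have hfin : m * (Nat.factorial (d + 1) : ℝ) / 2 ^ (d + 1) ≤ D * S := by
    refine hlow'.trans ?_
    rw [← mul_assoc]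
    exact mul_le_mul_of_nonneg_right hcmp hS0
  calc m * (Nat.factorial (d + 1) : ℝ) * D⁻¹ / 2 ^ (d + 1)
      = D⁻¹ * (m * (Nat.factorial (d + 1) : ℝ) / 2 ^ (d + 1)) := by ring
    _ ≤ D⁻¹ * (D * S) := mul_le_mul_of_nonneg_left hfin (inv_nonneg.mpr hDpos.le)
    _ = S := by rw [← mul_assoc, inv_mul_cancel₀ hDpos.ne', one_mul]
end
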